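/- arXiv:2003.09349 — 3 statements merged into one kernel-verified Lean document; each statement's English description precedes it below -/
import Mathlib

section
/- For every integer n ≥ 1 and every test function φ on ℂ, lim_{ε→0⁺} ∫_{|z|≥ε} (∂̄φ)(z)/z^{n+1} d²z = −(π/n!)·(∂ⁿφ)(0), where ∂ⁿφ is the n-fold iterate of ∂ applied to φ. (Equivalently, ∂̄(𝒫/z^{n+1}) = ((−1)ⁿ π/n!)·∂ⁿδ(z) in the sense of distributions.) -/
open MeasureTheory Filter

/-- The complex conjugate (Wirtinger) derivative `∂̄φ = (1/2)(∂φ/∂x + i ∂φ/∂y)`. -/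
noncomputable def wirtingerBar (φ : ℂ → ℂ) (z : ℂ) : ℂ :=
  (1 / 2) * (fderiv ℝ φ z 1 + Complex.I * fderiv ℝ φ z Complex.I)

/-- The Wirtinger derivative `∂φ = (1/2)(∂φ/∂x - i ∂φ/∂y)`, as an operator on
functions `ℂ → ℂ` (so that it can be iterated). -/
noncomputable def wirtinger (φ : ℂ → ℂ) : ℂ → ℂ :=
  fun z => (1 / 2) * (fderiv ℝ φ z 1 - Complex.I * fderiv ℝ φ z Complex.I)

open Complex Set Topology ComplexConjugate

lemma fderiv_eq_wirtinger_add_wirtingerBar (φ : ℂ → ℂ) (z v : ℂ) :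
    fderiv ℝ φ z v = wirtinger φ z * v + wirtingerBar φ z * conj v := by
  have hv : v = v.re • (1 : ℂ) + v.im • I := by simp [re_add_im]
  have hL : fderiv ℝ φ z v = v.re * fderiv ℝ φ z 1 + v.im * fderiv ℝ φ z I := by
    conv_lhs => rw [hv, map_add, map_smul, map_smul, real_smul, real_smul]
  have hc : conj v = v.re - v.im * I := by
    apply Complex.ext <;> simp
  have hv' : wirtinger φ z * v = wirtinger φ z * (v.re + v.im * I) := by rw [re_add_im]
  rw [hL, hc, hv']
  simp only [wirtinger, wirtingerBar]
  linear_combination ((v.im : ℂ) * fderiv ℝ φ z I) * I_sq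

lemma contDiff_wirtinger {φ : ℂ → ℂ} (hφ : ContDiff ℝ (⊤ : ℕ∞) φ) :
    ContDiff ℝ (⊤ : ℕ∞) (wirtinger φ) := by
  have h : ContDiff ℝ (⊤ : ℕ∞) (fderiv ℝ φ) := hφ.fderiv_right (by simp)
  unfold wirtinger
  fun_prop

lemma continuous_wirtingerBar {φ : ℂ → ℂ} (hφ : ContDiff ℝ 1 φ) :
    Continuous (wirtingerBar φ) := by
  have h : Continuous (fderiv ℝ φ) := hφ.continuous_fderiv (by simp)
  unfold wirtingerBar
  fun_prop

lemma continuous_wirtinger {φ : ℂ → ℂ} (hφ : ContDiff ℝ 1 φ) :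
    Continuous (wirtinger φ) := by
  have h : Continuous (fderiv ℝ φ) := hφ.continuous_fderiv (by simp)
  unfold wirtinger
  fun_prop

/-- `2π` times the `k`-th Fourier coefficient of `φ` restricted to the circle of radius `r`
centred at the origin. -/
noncomputable def circleCoeff (k : ℤ) (φ : ℂ → ℂ) (r : ℝ) : ℂ :=
  ∫ θ in (-Real.pi)..Real.pi, φ (r * exp (θ * I)) * exp (-(k * θ * I))

lemma continuous_circleCoeff (k : ℤ) {φ : ℂ → ℂ} (hφ : Continuous φ) :
    Continuous (circleCoeff k φ) := by
  unfold circleCoeff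
  apply intervalIntegral.continuous_parametric_intervalIntegral_of_continuous'
  fun_prop

lemma conj_exp_ofReal_mul_I (θ : ℝ) : conj (exp (θ * I)) = exp (-(θ * I)) := by
  rw [← exp_conj]; simp

lemma circleCoeff_sub_add (k : ℤ) {f g : ℂ → ℂ} (hf : Continuous f) (hg : Continuous g)
    (a b : ℂ) (r : ℝ) :
    a * circleCoeff (k - 1) f r + b * circleCoeff (k + 1) g r =
      ∫ θ in (-Real.pi)..Real.pi, (a * (f (r * exp (θ * I)) * exp (θ * I)) +
        b * (g (r * exp (θ * I)) * exp (-(θ * I)))) * exp (-(k * θ * I)) := by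
  unfold circleCoeff
  rw [← intervalIntegral.integral_const_mul, ← intervalIntegral.integral_const_mul,
    ← intervalIntegral.integral_add
      (Continuous.intervalIntegrable (by fun_prop) _ _)
      (Continuous.intervalIntegrable (by fun_prop) _ _)]
  refine intervalIntegral.integral_congr fun θ _ => ?_
  have h1 : exp (-(((k - 1 : ℤ) : ℂ) * θ * I)) = exp (θ * I) * exp (-(k * θ * I)) := by
    rw [← exp_add]; push_cast; ring_nf
  have h2 : exp (-(((k + 1 : ℤ) : ℂ) * θ * I)) = exp (-(θ * I)) * exp (-(k * θ * I)) := by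
    rw [← exp_add]; push_cast; ring_nf
  simp only [h1, h2]
  ring

lemma hasDerivAt_circleCoeff (k : ℤ) {φ : ℂ → ℂ} (hφ : ContDiff ℝ 1 φ) (r : ℝ) :
    HasDerivAt (circleCoeff k φ)
      (circleCoeff (k - 1) (wirtinger φ) r + circleCoeff (k + 1) (wirtingerBar φ) r) r := by
  have hw := continuous_wirtinger hφ
  have hwb := continuous_wirtingerBar hφ
  have hc := hφ.continuous
  have key := circleCoeff_sub_add k hw hwb 1 1 r
  simp only [one_mul] at key
  rw [key]
  set F' : ℝ → ℝ → ℂ := fun r θ => (wirtinger φ (r * exp (θ * I)) * exp (θ * I) +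
        wirtingerBar φ (r * exp (θ * I)) * exp (-(θ * I))) * exp (-(k * θ * I)) with hF'
  have hF'c : Continuous (Function.uncurry F') := by
    simp only [hF', Function.uncurry_def]
    fun_prop
  obtain ⟨C, hC⟩ := ((isCompact_Icc (a := r - 1) (b := r + 1)).prod
    (isCompact_uIcc (a := -Real.pi) (b := Real.pi))).exists_bound_of_continuousOn
    hF'c.continuousOn
  refine (intervalIntegral.hasDerivAt_integral_of_dominated_loc_of_deriv_le
    (F := fun (r θ : ℝ) => φ (r * exp (θ * I)) * exp (-(k * θ * I)))
    (F' := F') (bound := fun _ => C) (s := Icc (r - 1) (r + 1))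
    (Icc_mem_nhds (by linarith) (by linarith)) ?_ ?_ ?_ ?_ ?_ ?_).2
  · exact .of_forall fun x => Continuous.aestronglyMeasurable (by fun_prop)
  · exact Continuous.intervalIntegrable (by fun_prop) _ _
  · exact Continuous.aestronglyMeasurable (by fun_prop)
  · exact .of_forall fun θ hθ x hx => hC (x, θ) ⟨hx, uIoc_subset_uIcc hθ⟩
  · exact intervalIntegrable_const
  · refine .of_forall fun θ _ x _ => ?_
    have h1 : HasDerivAt (fun x : ℝ => (x : ℂ) * exp (θ * I)) (exp (θ * I)) x := by
      simpa using (hasDerivAt_id x).ofReal_comp.mul_const (exp (θ * I))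
    have h2 := ((hφ.differentiable (by simp) (x * exp (θ * I))).hasFDerivAt.comp_hasDerivAt x h1)
    rw [fderiv_eq_wirtinger_add_wirtingerBar, conj_exp_ofReal_mul_I] at h2
    exact h2.mul_const _

lemma intCast_mul_circleCoeff (k : ℤ) {φ : ℂ → ℂ} (hφ : ContDiff ℝ 1 φ) (r : ℝ) :
    k * circleCoeff k φ r =
      r * circleCoeff (k - 1) (wirtinger φ) r - r * circleCoeff (k + 1) (wirtingerBar φ) r := by
  have hw := continuous_wirtinger hφ
  have hwb := continuous_wirtingerBar hφ
  have hc := hφ.continuous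
  rw [sub_eq_add_neg, ← neg_mul, circleCoeff_sub_add k hw hwb]
  have hderiv : ∀ θ : ℝ, HasDerivAt (fun θ : ℝ => φ (r * exp (θ * I)) * exp (-(k * θ * I)))
      (I * (((r * (wirtinger φ (r * exp (θ * I)) * exp (θ * I)) +
        -r * (wirtingerBar φ (r * exp (θ * I)) * exp (-(θ * I)))) * exp (-(k * θ * I))) -
        k * (φ (r * exp (θ * I)) * exp (-(k * θ * I))))) θ := by
    intro θ
    have h0 : HasDerivAt (fun θ : ℝ => (θ : ℂ) * I) I θ := by
      simpa using (hasDerivAt_id θ).ofReal_comp.mul_const I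
    have h1 : HasDerivAt (fun θ : ℝ => (r : ℂ) * exp (θ * I)) (r * (exp (θ * I) * I)) θ :=
      h0.cexp.const_mul _
    have h2 := ((hφ.differentiable (by simp) (r * exp (θ * I))).hasFDerivAt.comp_hasDerivAt θ h1)
    rw [fderiv_eq_wirtinger_add_wirtingerBar] at h2
    simp only [map_mul, conj_exp_ofReal_mul_I, conj_I, conj_ofReal] at h2
    have h3 : HasDerivAt (fun θ : ℝ => exp (-((k : ℂ) * θ * I)))
        (exp (-(k * θ * I)) * (-(k * I))) θ := by
      have := (h0.const_mul (k : ℂ)).neg.cexp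
      simpa only [mul_assoc, Pi.neg_apply] using this
    refine (h2.mul h3).congr_deriv ?_
    simp only [Function.comp_apply]
    ring
  have hzero := intervalIntegral.integral_eq_sub_of_hasDerivAt (a := -Real.pi) (b := Real.pi)
    (fun θ _ => hderiv θ) (Continuous.intervalIntegrable (by fun_prop) _ _)
  have hper1 : exp (((-Real.pi : ℝ) : ℂ) * I) = exp ((Real.pi : ℂ) * I) := by
    rw [exp_eq_exp_iff_exists_int]
    exact ⟨-1, by push_cast; ring⟩
  have hper2 : exp (-((k : ℂ) * ((-Real.pi : ℝ) : ℂ) * I)) = exp (-(k * (Real.pi : ℂ) * I)) := by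
    rw [exp_eq_exp_iff_exists_int]
    exact ⟨k, by push_cast; ring⟩
  rw [hper1, hper2, sub_self, intervalIntegral.integral_const_mul,
    intervalIntegral.integral_sub (Continuous.intervalIntegrable (by fun_prop) _ _)
      (Continuous.intervalIntegrable (by fun_prop) _ _),
    intervalIntegral.integral_const_mul] at hzero
  have := (mul_eq_zero.mp hzero).resolve_left I_ne_zero
  exact (sub_eq_zero.mp this).symm

lemma hasDerivAt_pow_mul_circleCoeff (n : ℕ) {φ : ℂ → ℂ} (hφ : ContDiff ℝ 1 φ) {r : ℝ}
    (hr : r ≠ 0) :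
    HasDerivAt (fun r : ℝ => (r : ℂ) ^ n * circleCoeff n φ r)
      (2 * r ^ n * circleCoeff (n - 1) (wirtinger φ) r) r := by
  have hr' : (r : ℂ) ≠ 0 := ofReal_ne_zero.mpr hr
  have h1 : HasDerivAt (fun r : ℝ => (r : ℂ) ^ n) (n * r ^ (n - 1)) r := by
    simpa using (hasDerivAt_id r).ofReal_comp.fun_pow n
  refine (h1.mul (hasDerivAt_circleCoeff n hφ r)).congr_deriv ?_
  have h := intCast_mul_circleCoeff n hφ r
  rcases n with _ | n
  · simp only [Nat.cast_zero, Int.cast_zero, zero_mul] at h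
    have := mul_left_cancel₀ hr' (sub_eq_zero.mp h.symm)
    simp only [Nat.cast_zero, this]
    simp
    ring
  · simp only [Int.cast_natCast, Nat.add_sub_cancel] at h ⊢
    linear_combination (r : ℂ) ^ n * h

lemma hasDerivAt_circleCoeff_div_pow (n : ℕ) {φ : ℂ → ℂ} (hφ : ContDiff ℝ 1 φ) {r : ℝ}
    (hr : r ≠ 0) :
    HasDerivAt (fun r : ℝ => circleCoeff n φ r / (r : ℂ) ^ n)
      (2 * (circleCoeff (n + 1) (wirtingerBar φ) r / r ^ n)) r := by
  have hr' : (r : ℂ) ≠ 0 := ofReal_ne_zero.mpr hr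
  have h1 : HasDerivAt (fun r : ℝ => (r : ℂ) ^ n) (n * r ^ (n - 1)) r := by
    simpa using (hasDerivAt_id r).ofReal_comp.fun_pow n
  refine ((hasDerivAt_circleCoeff n hφ r).div h1 (pow_ne_zero n hr')).congr_deriv ?_
  have h := intCast_mul_circleCoeff n hφ r
  rcases n with _ | n
  · simp only [Nat.cast_zero, Int.cast_zero, zero_mul] at h
    have := mul_left_cancel₀ hr' (sub_eq_zero.mp h.symm)
    simp only [Nat.cast_zero, this]
    simp
    ring
  · simp only [Int.cast_natCast, Nat.add_sub_cancel] at h ⊢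
    field_simp
    linear_combination -((r : ℂ) ^ n) * h

lemma Complex.tendsto_div_nhdsGT_zero_of_hasDerivAt {f f' : ℝ → ℂ} {g g' : ℝ → ℝ} {l : ℂ}
    (hf : ∀ x > 0, HasDerivAt f (f' x) x) (hg : ∀ x > 0, HasDerivAt g (g' x) x)
    (hg' : ∀ x > 0, g' x ≠ 0) (hf0 : Tendsto f (𝓝[>] 0) (𝓝 0)) (hg0 : Tendsto g (𝓝[>] 0) (𝓝 0))
    (h : Tendsto (fun x => f' x / g' x) (𝓝[>] 0) (𝓝 l)) :
    Tendsto (fun x => f x / g x) (𝓝[>] 0) (𝓝 l) := by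
  have hev {p : ℝ → Prop} (hp : ∀ x > 0, p x) : ∀ᶠ x in 𝓝[>] 0, p x :=
    eventually_nhdsWithin_of_forall hp
  have hre := HasDerivAt.lhopital_zero_nhdsGT (f := fun x => (f x).re)
    (hev fun x hx => reCLM.hasFDerivAt.comp_hasDerivAt x (hf x hx)) (hev hg) (hev hg')
    (by simpa [Function.comp_def] using (continuous_re.tendsto 0).comp hf0) hg0
    (by simpa [Function.comp_def, div_ofReal_re] using (continuous_re.tendsto l).comp h)
  have him := HasDerivAt.lhopital_zero_nhdsGT (f := fun x => (f x).im)
    (hev fun x hx => imCLM.hasFDerivAt.comp_hasDerivAt x (hf x hx)) (hev hg) (hev hg')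
    (by simpa [Function.comp_def] using (continuous_im.tendsto 0).comp hf0) hg0
    (by simpa [Function.comp_def, div_ofReal_im] using (continuous_im.tendsto l).comp h)
  have := ((continuous_ofReal.tendsto _).comp hre).add
    (((continuous_ofReal.tendsto _).comp him).mul_const I)
  rw [re_add_im] at this
  refine this.congr fun x => ?_
  simp only [Function.comp_apply, ← div_ofReal_re, ← div_ofReal_im, re_add_im]

lemma tendsto_circleCoeff_div_pow (n : ℕ) {φ : ℂ → ℂ} (hφ : ContDiff ℝ (⊤ : ℕ∞) φ) :
    Tendsto (fun r : ℝ => circleCoeff n φ r / (r : ℂ) ^ n) (𝓝[>] 0)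
      (𝓝 (2 * Real.pi / n.factorial * (wirtinger^[n] φ) 0)) := by
  induction n generalizing φ with
  | zero =>
    have h := (continuous_circleCoeff 0 hφ.continuous).tendsto 0
    have h0 : circleCoeff 0 φ 0 = 2 * Real.pi * φ 0 := by
      simp [circleCoeff]
      ring_nf
      simp
    rw [h0] at h
    simpa using h.mono_left nhdsWithin_le_nhds
  | succ n ih =>
    have hφ1 : ContDiff ℝ 1 φ := hφ.of_le (by simp)
    have hc := continuous_circleCoeff (n + 1) hφ.continuous
    have key := Complex.tendsto_div_nhdsGT_zero_of_hasDerivAt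
      (f := fun r : ℝ => (r : ℂ) ^ (n + 1) * circleCoeff (n + 1 : ℕ) φ r)
      (f' := fun r : ℝ => 2 * r ^ (n + 1) * circleCoeff n (wirtinger φ) r)
      (g := fun r => r ^ (2 * n + 2)) (g' := fun r => (2 * n + 2 : ℕ) * r ^ (2 * n + 1))
      (l := 2 * Real.pi / (n + 1).factorial * (wirtinger^[n + 1] φ) 0)
      (fun r hr => by simpa using hasDerivAt_pow_mul_circleCoeff (n + 1) hφ1 hr.ne')
      (fun r hr => by simpa using hasDerivAt_pow (2 * n + 2) r)
      (fun r hr => by positivity)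
      ?_ ?_ ?_
    · refine key.congr' (eventually_nhdsWithin_of_forall fun r (hr : 0 < r) => ?_)
      have hr' : (r : ℂ) ≠ 0 := ofReal_ne_zero.mpr hr.ne'
      push_cast
      field_simp
      ring
    · refine Tendsto.mono_left ?_ nhdsWithin_le_nhds
      refine Continuous.tendsto' (by push_cast; fun_prop) _ _ (by simp)
    · refine Tendsto.mono_left ?_ nhdsWithin_le_nhds
      exact Continuous.tendsto' (by fun_prop) _ _ (by simp)
    · have h := (ih (contDiff_wirtinger hφ)).const_mul (1 / (n + 1) : ℂ)
      have hn : (n + 1 : ℂ) ≠ 0 := by exact_mod_cast n.succ_ne_zero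
      have hfac : (n.factorial : ℂ) ≠ 0 := by exact_mod_cast n.factorial_ne_zero
      have hl : (1 / (n + 1) : ℂ) * (2 * Real.pi / n.factorial * (wirtinger^[n] (wirtinger φ)) 0) =
          2 * Real.pi / (n + 1).factorial * (wirtinger^[n + 1] φ) 0 := by
        rw [Function.iterate_succ_apply, Nat.factorial_succ]
        push_cast
        field_simp
      rw [hl] at h
      refine h.congr' (eventually_nhdsWithin_of_forall fun r (hr : 0 < r) => ?_)
      have hr' : (r : ℂ) ≠ 0 := ofReal_ne_zero.mpr hr.ne'
      have hn2 : (2 * n + 2 : ℂ) ≠ 0 := by exact_mod_cast (2 * n + 1).succ_ne_zero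
      push_cast
      field_simp
      ring

lemma setIntegral_norm_Icc_eq_circleCoeff {f : ℂ → ℂ} {ε R : ℝ} (hε : 0 < ε) (hR : ε ≤ R)
    (hf : Continuous f) (m : ℕ) :
    ∫ z in {z : ℂ | ‖z‖ ∈ Icc ε R}, f z / z ^ (m + 1) =
      ∫ r in ε..R, circleCoeff (m + 1) f r / (r : ℂ) ^ m := by
  have hrect : Icc ε R ×ˢ Ioo (-Real.pi) Real.pi ⊆ Complex.polarCoord.target :=
    prod_mono (fun r hr => hε.trans_le hr.1) subset_rfl
  have hmeas : MeasurableSet {z : ℂ | ‖z‖ ∈ Icc ε R} := measurable_norm measurableSet_Icc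
  have hsymm (r θ : ℝ) : Complex.polarCoord.symm (r, θ) = r * exp (θ * I) := by
    rw [Complex.polarCoord_symm_apply, exp_mul_I, ofReal_cos, ofReal_sin]
  set g : ℝ × ℝ → ℂ := fun p =>
    f (p.1 * exp (p.2 * I)) * exp (-(((m + 1 : ℤ) : ℂ) * p.2 * I)) / (p.1 : ℂ) ^ m with hg
  have hgc : ContinuousOn g (Icc ε R ×ˢ Icc (-Real.pi) Real.pi) := by
    refine ContinuousOn.div (by fun_prop) (by fun_prop) fun p hp => ?_
    exact pow_ne_zero _ (ofReal_ne_zero.mpr (hε.trans_le hp.1.1).ne')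
  have hgi : IntegrableOn g (Icc ε R ×ˢ Ioo (-Real.pi) Real.pi) :=
    (hgc.integrableOn_compact (isCompact_Icc.prod isCompact_Icc)).mono_set
      (prod_mono subset_rfl Ioo_subset_Icc_self)
  rw [← integral_indicator hmeas, ← Complex.integral_comp_polarCoord_symm]
  calc _ = ∫ p in Icc ε R ×ˢ Ioo (-Real.pi) Real.pi, p.1 • indicator {z : ℂ | ‖z‖ ∈ Icc ε R}
          (fun z => f z / z ^ (m + 1)) (Complex.polarCoord.symm p) := by
        refine setIntegral_eq_of_subset_of_forall_sdiff_eq_zero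
          polarCoord.open_target.measurableSet hrect fun p hp => ?_
        have hp1 : 0 < p.1 := hp.1.1
        have : p.1 ∉ Icc ε R := fun h => hp.2 ⟨h, hp.1.2⟩
        rw [indicator_of_notMem, smul_zero]
        rwa [mem_ofPred_eq, norm_polarCoord_symm, abs_of_pos hp1]
    _ = ∫ p in Icc ε R ×ˢ Ioo (-Real.pi) Real.pi, g p := by
        refine setIntegral_congr_fun (measurableSet_Icc.prod measurableSet_Ioo) ?_
        rintro ⟨r, θ⟩ hp
        have hr : 0 < r := hε.trans_le hp.1.1
        have hr' : (r : ℂ) ≠ 0 := ofReal_ne_zero.mpr hr.ne'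
        have hexp : exp (-(((m + 1 : ℤ) : ℂ) * θ * I)) = (exp (θ * I) ^ (m + 1))⁻¹ := by
          rw [← exp_nat_mul, ← exp_neg]
          push_cast
          ring_nf
        have he := exp_ne_zero (θ * I)
        beta_reduce
        rw [indicator_of_mem, hsymm]
        · simp only [hg, hexp, real_smul]
          field_simp
          ring
        · rw [mem_ofPred_eq, norm_polarCoord_symm, abs_of_pos hr]
          exact hp.1
    _ = ∫ r in Icc ε R, ∫ θ in Ioo (-Real.pi) Real.pi, g (r, θ) := setIntegral_prod g hgi
    _ = _ := by
        rw [intervalIntegral.integral_of_le hR, integral_Icc_eq_integral_Ioc]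
        refine setIntegral_congr_fun measurableSet_Ioc fun r _ => ?_
        simp only [hg, circleCoeff]
        rw [intervalIntegral.integral_of_le (by linarith [Real.pi_pos]),
          integral_Ioc_eq_integral_Ioo, integral_div]

/-- For `n ≥ 1` and a test function `φ` on `ℂ`,
`lim_{ε→0⁺} ∫_{|z|≥ε} (∂̄φ)(z)/z^{n+1} d²z = -(π/n!) (∂ⁿφ)(0)`,
i.e. `∂̄(𝒫/z^{n+1}) = ((-1)ⁿ π/n!) ∂ⁿδ(z)` as distributions. -/
theorem tendsto_integral_wirtingerBar_div_pow (n : ℕ) (hn : 1 ≤ n) (φ : ℂ → ℂ)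
    (hφ : ContDiff ℝ (⊤ : ℕ∞) φ) (hsupp : HasCompactSupport φ) :
    Tendsto (fun ε : ℝ => ∫ z in {z : ℂ | ε ≤ ‖z‖}, wirtingerBar φ z / z ^ (n + 1))
      (nhdsWithin 0 (Set.Ioi 0))
      (nhds (-((Real.pi : ℂ) / (n.factorial : ℂ)) * (wirtinger^[n] φ) 0)) := by
  have hφ1 : ContDiff ℝ 1 φ := hφ.of_le (by simp)
  obtain ⟨R, hR0, hR⟩ : ∃ R : ℝ, 0 < R ∧ ∀ z : ℂ, R ≤ ‖z‖ → φ z = 0 ∧ wirtingerBar φ z = 0 := by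
    obtain ⟨R, hR0, hR⟩ := hsupp.isCompact.isBounded.exists_pos_norm_lt
    refine ⟨R, hR0, fun z hz => ?_⟩
    have hz' : z ∉ tsupport φ := fun h => (hR z h).not_ge hz
    exact ⟨image_eq_zero_of_notMem_tsupport hz',
      by simp [wirtingerBar, fderiv_of_notMem_tsupport ℝ hz']⟩
  have hlim := (tendsto_circleCoeff_div_pow n hφ).const_mul (-(1 / 2) : ℂ)
  have hl : (-(1 / 2) : ℂ) * (2 * Real.pi / n.factorial * (wirtinger^[n] φ) 0) =
      -((Real.pi : ℂ) / (n.factorial : ℂ)) * (wirtinger^[n] φ) 0 := by ring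
  rw [hl] at hlim
  refine hlim.congr' ?_
  filter_upwards [Ioo_mem_nhdsGT hR0] with ε ⟨hε, hεR⟩
  have hset : ∫ z in {z : ℂ | ε ≤ ‖z‖}, wirtingerBar φ z / z ^ (n + 1) =
      ∫ z in {z : ℂ | ‖z‖ ∈ Icc ε R}, wirtingerBar φ z / z ^ (n + 1) := by
    refine setIntegral_eq_of_subset_of_forall_sdiff_eq_zero
      (measurableSet_le measurable_const measurable_norm) (fun z hz => hz.1) fun z hz => ?_
    have : R ≤ ‖z‖ := by
      by_contra! h
      exact hz.2 ⟨hz.1, h.le⟩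
    simp [(hR z this).2]
  have hcR : circleCoeff n φ R = 0 := by
    have : ∀ θ : ℝ, φ (R * exp (θ * I)) = 0 := fun θ =>
      (hR _ (by simp [norm_exp_ofReal_mul_I, abs_of_pos hR0])).1
    simp [circleCoeff, this]
  have hpos : ∀ r ∈ uIcc ε R, r ≠ 0 := fun r hr => by
    rw [uIcc_of_le hεR.le] at hr
    exact (hε.trans_le hr.1).ne'
  have hftc := intervalIntegral.integral_eq_sub_of_hasDerivAt (a := ε) (b := R)
    (fun r hr => hasDerivAt_circleCoeff_div_pow n hφ1 (hpos r hr)) (by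
      refine ContinuousOn.intervalIntegrable ?_
      have := continuous_circleCoeff (n + 1) (continuous_wirtingerBar hφ1)
      refine continuousOn_const.mul (this.continuousOn.div (by fun_prop) fun r hr => ?_)
      exact pow_ne_zero _ (ofReal_ne_zero.mpr (hpos r hr)))
  rw [intervalIntegral.integral_const_mul, hcR] at hftc
  rw [hset, setIntegral_norm_Icc_eq_circleCoeff hε hεR.le (continuous_wirtingerBar hφ1)]
  linear_combination -(1 / 2) * hftc
end

section
/- For every test function φ on ℝ: lim_{u→0⁺} ∫_ℝ φ(x)/(x + iu) dx = −∫_ℝ φ′(x)·ln|x| dx − iπ·φ(0), and lim_{u→0⁻} ∫_ℝ φ(x)/(x + iu) dx = −∫_ℝ φ′(x)·ln|x| dx + iπ·φ(0). (Here −∫ φ′(x) ln|x| dx is the principal-value pairing ⟨𝒫/x, φ⟩, so this states 1/(x ± i0) = 𝒫/x ∓ iπδ(x).) -/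
open MeasureTheory Filter

theorem Real.locallyIntegrable_log : LocallyIntegrable Real.log := by
  intro x
  refine ⟨Set.Ioc (x - 1) (x + 1), Ioc_mem_nhds (by linarith) (by linarith), ?_⟩
  exact (intervalIntegrable_iff_integrableOn_Ioc_of_le (by linarith)).1
    intervalIntegral.intervalIntegrable_log'

theorem Complex.norm_log_add_I_mul_le {x u : ℝ} (hx : x ≠ 0) (hu : |u| ≤ 1) :
    ‖Complex.log (x + Complex.I * u)‖ ≤ |Real.log x| + |x| + Real.pi := by
  set z : ℂ := x + Complex.I * u with hz
  have hx0 : 0 < |x| := abs_pos.2 hx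
  have h1 : |x| ≤ ‖z‖ := by simpa [hz] using Complex.abs_re_le_norm z
  have h2 : ‖z‖ ≤ |x| + 1 := by
    refine (norm_add_le _ _).trans ?_
    simpa using hu
  have h3 : Real.log x ≤ Real.log ‖z‖ := by
    rw [← Real.log_abs x]
    exact Real.log_le_log hx0 h1
  have h4 : Real.log ‖z‖ ≤ |x| := by
    have := Real.log_le_sub_one_of_pos (hx0.trans_le h1)
    linarith
  have h5 : |Real.log ‖z‖| ≤ |Real.log x| + |x| := by
    rw [abs_le]
    constructor <;> linarith [neg_abs_le (Real.log x), abs_nonneg (Real.log x)]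
  calc ‖Complex.log z‖ ≤ |(Complex.log z).re| + |(Complex.log z).im| :=
        Complex.norm_le_abs_re_add_abs_im _
    _ ≤ _ := by
        rw [Complex.log_re, Complex.log_im]
        exact add_le_add h5 (Complex.abs_arg_le_pi z)

theorem Complex.add_I_mul_mem_slitPlane {u : ℝ} (hu : u ≠ 0) (x : ℝ) :
    (x + Complex.I * u : ℂ) ∈ Complex.slitPlane :=
  Complex.mem_slitPlane_iff.2 (Or.inr (by simpa using hu))

theorem integral_div_add_I_mul_eq_neg_integral_deriv_mul_log {φ : ℝ → ℂ}
    (hφ : ContDiff ℝ 1 φ) (hsupp : HasCompactSupport φ) {u : ℝ} (hu : u ≠ 0) :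
    ∫ x : ℝ, φ x / (x + Complex.I * u) =
      -∫ x : ℝ, deriv φ x * Complex.log (x + Complex.I * u) := by
  have hmem := Complex.add_I_mul_mem_slitPlane hu
  have hlog : ∀ x : ℝ, HasDerivAt (fun y : ℝ => Complex.log (y + Complex.I * u))
      (x + Complex.I * u : ℂ)⁻¹ x := fun x => by
    simpa using ((Complex.ofRealCLM.hasDerivAt (x := x)).add_const (Complex.I * u)).clog_real
      (hmem x)
  have hlogc : Continuous fun y : ℝ => Complex.log (y + Complex.I * u) :=
    continuous_iff_continuousAt.2 fun x => (hlog x).continuousAt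
  have hinv : Continuous fun x : ℝ => (x + Complex.I * u : ℂ)⁻¹ :=
    Continuous.inv₀ (by fun_prop) fun x => Complex.slitPlane_ne_zero (hmem x)
  have hφ' := hφ.continuous_deriv le_rfl
  simp_rw [div_eq_mul_inv]
  exact integral_mul_deriv_eq_deriv_mul_of_integrable
    (fun x _ => (hφ.differentiable one_ne_zero x).hasDerivAt) (fun x _ => hlog x)
    ((hφ.continuous.mul hinv).integrable_of_hasCompactSupport hsupp.mul_right)
    ((hφ'.mul hlogc).integrable_of_hasCompactSupport hsupp.deriv.mul_right)
    ((hφ.continuous.mul hlogc).integrable_of_hasCompactSupport hsupp.mul_right)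

theorem tendsto_integral_div_add_I_mul {φ : ℝ → ℂ} (hφ : ContDiff ℝ 1 φ)
    (hsupp : HasCompactSupport φ) {l : Filter ℝ} [l.IsCountablyGenerated]
    (hl : l ≤ nhdsWithin 0 {0}ᶜ) (c : ℂ)
    (hc : ∀ x : ℝ, x < 0 →
      Tendsto (fun u : ℝ => Complex.log (x + Complex.I * u)) l (nhds (Real.log |x| + c))) :
    Tendsto (fun u : ℝ => ∫ x : ℝ, φ x / (x + Complex.I * u)) l
      (nhds ((-∫ x : ℝ, deriv φ x * (Real.log |x| : ℂ)) - c * φ 0)) := by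
  have hφ' := hφ.continuous_deriv le_rfl
  have hl0 : l ≤ nhds 0 := hl.trans nhdsWithin_le_nhds
  have hne : ∀ᶠ u in l, u ≠ 0 := hl self_mem_nhdsWithin
  have hle : ∀ᶠ u in l, |u| ≤ 1 := by
    refine hl0 ?_
    filter_upwards [Metric.closedBall_mem_nhds (0 : ℝ) one_pos] with u hu
    simpa using hu
  have hφlog : Integrable fun x : ℝ => deriv φ x * (Real.log |x| : ℂ) := by
    have h := Real.locallyIntegrable_log.integrable_smul_left_of_hasCompactSupport
      hφ'.norm hsupp.deriv.norm
    refine h.mono (hφ'.aestronglyMeasurable.mul ?_) (ae_of_all _ fun x => ?_)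
    · exact (Complex.measurable_ofReal.comp
        (Real.measurable_log.comp measurable_norm)).aestronglyMeasurable
    · simp
  have hind : Integrable ((Set.Iic (0 : ℝ)).indicator fun x => c * deriv φ x) :=
    ((hφ'.integrable_of_hasCompactSupport hsupp.deriv).const_mul c).indicator measurableSet_Iic
  have hlim : Tendsto (fun u : ℝ => ∫ x : ℝ, deriv φ x * Complex.log (x + Complex.I * u)) l
      (nhds (∫ x : ℝ, (deriv φ x * (Real.log |x| : ℂ) +
        (Set.Iic (0 : ℝ)).indicator (fun x => c * deriv φ x) x))) := by
    refine tendsto_integral_filter_of_dominated_convergence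
      (fun x => ‖deriv φ x‖ • (|Real.log x| + |x| + Real.pi)) ?_ ?_ ?_ ?_
    · refine Eventually.of_forall fun u => hφ'.aestronglyMeasurable.mul ?_
      exact (Complex.measurable_log.comp
        (Complex.measurable_ofReal.add_const _)).aestronglyMeasurable
    · filter_upwards [hle] with u hu
      filter_upwards [Measure.ae_ne volume (0 : ℝ)] with x hx
      rw [norm_mul, smul_eq_mul]
      exact mul_le_mul_of_nonneg_left (Complex.norm_log_add_I_mul_le hx hu) (norm_nonneg _)
    · refine LocallyIntegrable.integrable_smul_left_of_hasCompactSupport ?_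
        hφ'.norm hsupp.deriv.norm
      exact (LocallyIntegrable.add (fun x => (Real.locallyIntegrable_log x).norm)
        continuous_abs.locallyIntegrable).add
        (locallyIntegrable_const _)
    · filter_upwards [Measure.ae_ne volume (0 : ℝ)] with x hx
      rcases hx.lt_or_gt with hx | hx
      · rw [Set.indicator_of_mem (Set.mem_Iic.2 hx.le), mul_comm c, ← mul_add]
        exact (hc x hx).const_mul _
      · rw [Set.indicator_of_notMem (by simpa using hx), add_zero, abs_of_pos hx,
          Complex.ofReal_log hx.le]
        refine Tendsto.const_mul _ ?_
        have hcont : ContinuousAt (fun u : ℝ => Complex.log (x + Complex.I * u)) 0 :=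
          ContinuousAt.clog (by fun_prop) (by simpa using hx)
        simpa using hcont.tendsto.mono_left hl0
  rw [integral_add hφlog hind, integral_indicator measurableSet_Iic, integral_const_mul,
    hsupp.integral_Iic_deriv_eq hφ] at hlim
  rw [sub_eq_add_neg, ← neg_add]
  refine hlim.neg.congr' ?_
  filter_upwards [hne] with u hu
  exact (integral_div_add_I_mul_eq_neg_integral_deriv_mul_log hφ hsupp hu).symm

/-- For every test function `φ` on `ℝ`,
`lim_{u→0⁺} ∫ φ(x)/(x+iu) dx = -∫ φ'(x) ln|x| dx - iπ φ(0)` and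
`lim_{u→0⁻} ∫ φ(x)/(x+iu) dx = -∫ φ'(x) ln|x| dx + iπ φ(0)`,
i.e. `1/(x ± i0) = 𝒫/x ∓ iπδ(x)`. -/
theorem sokhotski_plemelj (φ : ℝ → ℂ)
    (hφ : ContDiff ℝ (⊤ : ℕ∞) φ) (hsupp : HasCompactSupport φ) :
    Tendsto (fun u : ℝ => ∫ x : ℝ, φ x / (x + Complex.I * u))
      (nhdsWithin 0 (Set.Ioi 0))
      (nhds ((-∫ x : ℝ, deriv φ x * (Real.log |x| : ℂ)) -
        Complex.I * Real.pi * φ 0)) ∧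
    Tendsto (fun u : ℝ => ∫ x : ℝ, φ x / (x + Complex.I * u))
      (nhdsWithin 0 (Set.Iio 0))
      (nhds ((-∫ x : ℝ, deriv φ x * (Real.log |x| : ℂ)) +
        Complex.I * Real.pi * φ 0)) := by
  have hφ1 : ContDiff ℝ 1 φ := hφ.of_le (by exact_mod_cast le_top)
  have htend : ∀ x : ℝ, Tendsto (fun u : ℝ => (x + Complex.I * u : ℂ)) (nhds 0) (nhds x) :=
    fun x => Continuous.tendsto' (by fun_prop) _ _ (by simp)
  constructor
  · rw [mul_comm Complex.I (Real.pi : ℂ)]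
    refine tendsto_integral_div_add_I_mul hφ1 hsupp (l := nhdsWithin 0 (Set.Ioi 0))
      (nhdsWithin_mono _ fun u hu => ne_of_gt hu) _ fun x hx => ?_
    have h := Complex.tendsto_log_nhdsWithin_im_nonneg_of_re_neg_of_im_zero
      (z := x) (by simpa using hx) (by simp)
    rw [Complex.norm_real, Real.norm_eq_abs] at h
    refine h.comp (tendsto_nhdsWithin_iff.2 ⟨(htend x).mono_left nhdsWithin_le_nhds, ?_⟩)
    filter_upwards [self_mem_nhdsWithin] with u hu
    simpa using le_of_lt hu
  · rw [mul_comm Complex.I (Real.pi : ℂ), ← sub_neg_eq_add, ← neg_mul]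
    refine tendsto_integral_div_add_I_mul hφ1 hsupp (l := nhdsWithin 0 (Set.Iio 0))
      (nhdsWithin_mono _ fun u hu => ne_of_lt hu) _ fun x hx => ?_
    have h := Complex.tendsto_log_nhdsWithin_im_neg_of_re_neg_of_im_zero
      (z := x) (by simpa using hx) (by simp)
    rw [Complex.norm_real, Real.norm_eq_abs, sub_eq_add_neg] at h
    refine h.comp (tendsto_nhdsWithin_iff.2 ⟨(htend x).mono_left nhdsWithin_le_nhds, ?_⟩)
    filter_upwards [self_mem_nhdsWithin] with u hu
    simpa using hu
end

section
/- Let H be a complex Hilbert space and U a unitary operator on H. For every z ∈ ℂ with |z| ≠ 1 the operator z·id_H − U is invertible in the bounded operators on H, and for every test function φ on ℂ there exists a bounded operator L on H such that ∫_{{z ∈ ℂ : | |z| − 1 | > ε}} φ(z)·(z·id_H − U)⁻¹ d²z converges to L in operator norm as ε → 0⁺. (Thus the resolvent of a unitary operator extends to a distribution on the whole complex plane.) -/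
open MeasureTheory Filter

lemma locallyIntegrable_inv_sub (w : ℂ) :
    LocallyIntegrable (fun z : ℂ => (z - w)⁻¹) := by
  have h : LocallyIntegrable (fun z : ℂ => z⁻¹) := by
    have hdim : Module.finrank ℝ ℂ = 2 := Complex.finrank_real_complex
    exact locallyIntegrable_of_norm_le_rpow (C := 1) (α := 1) (by simp [hdim]) (by simp [hdim])
      (Eventually.of_forall fun z => by simp [Real.rpow_neg_one])
      measurable_inv.aestronglyMeasurable
  rw [locallyIntegrable_iff] at h ⊢
  intro K hK
  have hK' := h _ (hK.image (continuous_sub_right w))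
  rwa [← (measurePreserving_sub_right volume w).integrableOn_comp_preimage
    (MeasurableEquiv.subRight w).measurableEmbedding,
    (sub_left_injective (b := w)).preimage_image] at hK'

/-- The integral of `1 / |z - w|` over an annulus around the unit circle does not depend on the
point `w` of the circle. -/
lemma setIntegral_annulus_norm_inv_sub (ε : ℝ) {w : ℂ} (hw : ‖w‖ = 1) :
    ∫ z in {z : ℂ | |‖z‖ - 1| ≤ ε}, ‖(z - w)⁻¹‖ =
      ∫ z in {z : ℂ | |‖z‖ - 1| ≤ ε}, ‖(z - 1)⁻¹‖ := by
  let c : Circle := ⟨w, by simpa [Submonoid.unitSphere] using hw⟩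
  have h := (rotation c).measurePreserving.setIntegral_preimage_emb
    (rotation c).toHomeomorph.measurableEmbedding (fun z => ‖(z - w)⁻¹‖)
    {z : ℂ | |‖z‖ - 1| ≤ ε}
  rw [← h]
  have hs : rotation c ⁻¹' {z : ℂ | |‖z‖ - 1| ≤ ε} = {z : ℂ | |‖z‖ - 1| ≤ ε} := by
    ext z
    simp only [Set.mem_preimage, Set.mem_ofPred, LinearIsometryEquiv.norm_map]
  rw [hs]
  congr 1 with z
  have : rotation c z - w = w * (z - 1) := by
    rw [rotation_apply]
    change w * z - w = _
    ring
  rw [this, mul_inv, norm_mul, norm_inv, hw, inv_one, one_mul]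

lemma tendsto_setIntegral_annulus_norm_inv_sub_one :
    Tendsto (fun ε : ℝ => ∫ z in {z : ℂ | |‖z‖ - 1| ≤ ε}, ‖(z - 1)⁻¹‖)
      (nhdsWithin 0 (Set.Ioi 0)) (nhds 0) := by
  have hmeas (ε : ℝ) : MeasurableSet {z : ℂ | |‖z‖ - 1| ≤ ε} :=
    measurableSet_le (by fun_prop) measurable_const
  have hint : IntegrableOn (fun z : ℂ => ‖(z - 1)⁻¹‖) (Metric.closedBall 0 2) :=
    ((locallyIntegrable_inv_sub 1).integrableOn_isCompact (isCompact_closedBall 0 2)).norm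
  have key : Tendsto (fun ε : ℝ => ∫ z, {z : ℂ | |‖z‖ - 1| ≤ ε}.indicator
      (fun z => ‖(z - 1)⁻¹‖) z) (nhdsWithin 0 (Set.Ioi 0)) (nhds (∫ _ : ℂ, (0 : ℝ))) := by
    refine tendsto_integral_filter_of_dominated_convergence
      ((Metric.closedBall (0 : ℂ) 2).indicator fun z => ‖(z - 1)⁻¹‖) ?_ ?_
      ((integrable_indicator_iff measurableSet_closedBall).2 hint) ?_
    · exact .of_forall fun ε =>
        (Measurable.indicator (by fun_prop) (hmeas ε)).aestronglyMeasurable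
    · filter_upwards [nhdsWithin_le_nhds (Iio_mem_nhds one_pos)] with ε hε
      refine .of_forall fun z => ?_
      rw [norm_indicator_eq_indicator_norm]
      simp only [norm_norm]
      refine Set.indicator_le_indicator_of_subset (fun z hz => ?_) (fun _ => norm_nonneg _) z
      have := (abs_le.1 (Set.mem_ofPred.1 hz)).2
      rw [mem_closedBall_zero_iff]
      linarith [Set.mem_Iio.1 hε]
    · have hsphere : ∀ᵐ z : ℂ, z ∉ Metric.sphere (0 : ℂ) 1 :=
        measure_eq_zero_iff_ae_notMem.1 (Measure.addHaar_sphere volume 0 1)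
      filter_upwards [hsphere] with z hz
      have hpos : 0 < |‖z‖ - 1| := abs_pos.2 (sub_ne_zero.2 (by simpa using hz))
      refine tendsto_const_nhds.congr' ?_
      filter_upwards [nhdsWithin_le_nhds (Iio_mem_nhds hpos)] with ε hε
      have hz' : z ∉ {z : ℂ | |‖z‖ - 1| ≤ ε} := not_le.2 (Set.mem_Iio.1 hε)
      rw [Set.indicator_of_notMem hz']
  simpa only [integral_indicator (hmeas _), integral_zero] using key

/-- The Cauchy transforms of `φ` truncated away from the unit circle converge uniformly on the
unit circle to the full Cauchy transform. -/
lemma tendstoUniformlyOn_truncated_cauchyTransform {φ : ℂ → ℂ} (hφ : Continuous φ)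
    (hc : HasCompactSupport φ) :
    TendstoUniformlyOn (fun (ε : ℝ) (w : ℂ) => ∫ z in {z : ℂ | ε < |‖z‖ - 1|}, φ z * (z - w)⁻¹)
      (fun w => ∫ z, φ z * (z - w)⁻¹) (nhdsWithin 0 (Set.Ioi 0)) (Metric.sphere 0 1) := by
  obtain ⟨M, hM⟩ := hc.exists_bound_of_continuous hφ
  have hlim : Tendsto (fun ε : ℝ => M * ∫ z in {z : ℂ | |‖z‖ - 1| ≤ ε}, ‖(z - 1)⁻¹‖)
      (nhdsWithin 0 (Set.Ioi 0)) (nhds 0) := by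
    simpa using tendsto_setIntegral_annulus_norm_inv_sub_one.const_mul M
  rw [Metric.tendstoUniformlyOn_iff]
  intro δ hδ
  filter_upwards [hlim.eventually (gt_mem_nhds hδ),
    nhdsWithin_le_nhds (Iio_mem_nhds one_pos)] with ε hε hε1 w hw
  have hw : ‖w‖ = 1 := by simpa using hw
  have hint : Integrable (fun z => φ z * (z - w)⁻¹) :=
    (locallyIntegrable_inv_sub w).integrable_smul_left_of_hasCompactSupport hφ hc
  have hmeas : MeasurableSet {z : ℂ | ε < |‖z‖ - 1|} :=
    measurableSet_lt measurable_const (by fun_prop)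
  have hcompl : {z : ℂ | ε < |‖z‖ - 1|}ᶜ = {z : ℂ | |‖z‖ - 1| ≤ ε} := by
    ext z
    simp
  have hball : {z : ℂ | |‖z‖ - 1| ≤ ε} ⊆ Metric.closedBall 0 2 := fun z hz => by
    have := (abs_le.1 (Set.mem_ofPred.1 hz)).2
    rw [mem_closedBall_zero_iff]
    linarith [Set.mem_Iio.1 hε1]
  have hinv : IntegrableOn (fun z => (z - w)⁻¹) {z : ℂ | |‖z‖ - 1| ≤ ε} :=
    ((locallyIntegrable_inv_sub w).integrableOn_isCompact (isCompact_closedBall 0 2)).mono_set hball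
  rw [dist_eq_norm, ← integral_add_compl hmeas hint, add_sub_cancel_left, hcompl]
  calc ‖∫ z in {z : ℂ | |‖z‖ - 1| ≤ ε}, φ z * (z - w)⁻¹‖
      ≤ ∫ z in {z : ℂ | |‖z‖ - 1| ≤ ε}, M * ‖(z - w)⁻¹‖ := by
        refine norm_integral_le_of_norm_le (hinv.norm.const_mul M) (.of_forall fun z => ?_)
        rw [norm_mul]
        gcongr
        exact hM z
    _ = M * ∫ z in {z : ℂ | |‖z‖ - 1| ≤ ε}, ‖(z - 1)⁻¹‖ := by
        rw [integral_const_mul, setIntegral_annulus_norm_inv_sub ε hw]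
    _ < δ := hε

section CStarAlgebra

variable {A : Type*} [CStarAlgebra A] {u : A}

lemma isUnit_smul_one_sub_of_unitary (hu : u ∈ unitary A) {z : ℂ} (hz : ‖z‖ ≠ 1) :
    IsUnit (z • (1 : A) - u) := by
  by_contra h
  refine hz (spectrum.norm_eq_one_of_unitary hu (𝕜 := ℂ) ?_)
  rwa [spectrum.mem_iff, Algebra.algebraMap_eq_smul_one]

lemma cfc_mul_inv_sub_of_unitary (hu : u ∈ unitary A) (c : ℂ) {z : ℂ} (hz : ‖z‖ ≠ 1) :
    cfc (fun w : ℂ => c * (z - w)⁻¹) u = c • Ring.inverse (z • (1 : A) - u) := by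
  have hn : IsStarNormal u := isStarNormal_of_mem_unitary hu
  have hne : ∀ w ∈ spectrum ℂ u, z - w ≠ 0 := fun w hw h =>
    hz (sub_eq_zero.1 h ▸ spectrum.norm_eq_one_of_unitary hu hw)
  have hcont : ContinuousOn (fun w : ℂ => (z - w)⁻¹) (spectrum ℂ u) :=
    (by fun_prop : Continuous fun w : ℂ => z - w).continuousOn.inv₀ hne
  rw [cfc_const_mul c (fun w => (z - w)⁻¹) u hcont, cfc_inv (fun w => z - w) u hne,
    cfc_sub (fun _ => z) (fun w => w) u, cfc_const z u, cfc_id' ℂ u, Algebra.algebraMap_eq_smul_one]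

lemma setIntegral_smul_resolvent_of_unitary (hu : u ∈ unitary A) {φ : ℂ → ℂ} (hφ : Continuous φ)
    (hc : HasCompactSupport φ) {ε : ℝ} (hε : 0 < ε) :
    ContinuousOn (fun w => ∫ z in {z : ℂ | ε < |‖z‖ - 1|}, φ z * (z - w)⁻¹) (spectrum ℂ u) ∧
    cfc (fun w => ∫ z in {z : ℂ | ε < |‖z‖ - 1|}, φ z * (z - w)⁻¹) u =
      ∫ z in {z : ℂ | ε < |‖z‖ - 1|}, φ z • Ring.inverse (z • (1 : A) - u) := by
  have hn : IsStarNormal u := isStarNormal_of_mem_unitary hu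
  have hmeas : MeasurableSet {z : ℂ | ε < |‖z‖ - 1|} :=
    measurableSet_lt measurable_const (by fun_prop)
  have hlow : ∀ z ∈ {z : ℂ | ε < |‖z‖ - 1|}, ∀ w ∈ spectrum ℂ u, ε ≤ ‖z - w‖ := by
    intro z hz w hw
    have := abs_norm_sub_norm_le z w
    rw [spectrum.norm_eq_one_of_unitary hu hw] at this
    exact (Set.mem_ofPred.1 hz).le.trans this
  have hcont : ContinuousOn (Function.uncurry fun z w : ℂ => φ z * (z - w)⁻¹)
      ({z : ℂ | ε < |‖z‖ - 1|} ×ˢ spectrum ℂ u) := by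
    refine (hφ.comp continuous_fst).continuousOn.mul
      ((continuous_fst.sub continuous_snd).continuousOn.inv₀ fun p hp => ?_)
    exact norm_pos_iff.1 (hε.trans_le (hlow p.1 hp.1 p.2 hp.2))
  have hbound : ∀ z ∈ {z : ℂ | ε < |‖z‖ - 1|}, ∀ w ∈ spectrum ℂ u,
      ‖φ z * (z - w)⁻¹‖ ≤ ‖φ z‖ * ε⁻¹ := by
    intro z hz w hw
    rw [norm_mul, norm_inv]
    gcongr
    exact hlow z hz w hw
  have hint : IntegrableOn (fun z => ‖φ z‖ * ε⁻¹) {z : ℂ | ε < |‖z‖ - 1|} :=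
    ((hφ.integrable_of_hasCompactSupport hc).norm.mul_const _).integrableOn
  constructor
  · refine continuousOn_of_dominated (bound := fun z => ‖φ z‖ * ε⁻¹) (fun w _ => ?_)
      (fun w hw => ae_restrict_of_forall_mem hmeas fun z hz => hbound z hz w hw) hint
      (ae_restrict_of_forall_mem hmeas fun z hz =>
        hcont.comp (Continuous.prodMk_right z).continuousOn fun w hw => ⟨hz, hw⟩)
    exact (hφ.measurable.mul (by fun_prop)).aestronglyMeasurable
  · rw [cfc_setIntegral hmeas _ (fun z => ‖φ z‖ * ε⁻¹) u hcont
      (ae_restrict_of_forall_mem hmeas hbound) hint.2]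
    refine setIntegral_congr_fun hmeas fun z hz => cfc_mul_inv_sub_of_unitary hu (φ z) ?_
    intro h
    rw [Set.mem_ofPred, h, sub_self, abs_zero] at hz
    exact hε.not_gt hz

end CStarAlgebra

open MeasureTheory Filter

/-- For a unitary operator `U` on a complex Hilbert space `H`, the
operator `z•1 - U` is invertible for `|z| ≠ 1`, and for every test function `φ` on `ℂ`
the integrals `∫_{| |z|-1 | > ε} φ(z) (z•1-U)⁻¹ d²z` converge in operator norm as
`ε → 0⁺`: the resolvent of a unitary operator extends to a distribution on all of `ℂ`. -/
theorem unitary_resolvent_distribution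
    (H : Type*) [NormedAddCommGroup H] [InnerProductSpace ℂ H] [CompleteSpace H]
    (U : H →L[ℂ] H) (hU : U ∈ unitary (H →L[ℂ] H)) :
    (∀ z : ℂ, ‖z‖ ≠ 1 → IsUnit (z • (1 : H →L[ℂ] H) - U)) ∧
    ∀ φ : ℂ → ℂ, ContDiff ℝ (⊤ : ℕ∞) φ → HasCompactSupport φ →
      ∃ L : H →L[ℂ] H,
        Tendsto (fun ε : ℝ =>
            ∫ z in {z : ℂ | ε < |‖z‖ - 1|}, φ z • Ring.inverse (z • (1 : H →L[ℂ] H) - U))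
          (nhdsWithin 0 (Set.Ioi 0)) (nhds L) := by
  refine ⟨fun z hz => isUnit_smul_one_sub_of_unitary hU hz, fun φ hφ hc => ?_⟩
  refine ⟨cfc (fun w => ∫ z, φ z * (z - w)⁻¹) U, ?_⟩
  have hlim := (tendstoUniformlyOn_truncated_cauchyTransform hφ.continuous hc).mono
    (spectrum.subset_circle_of_unitary (𝕜 := ℂ) hU)
  refine (tendsto_cfc_fun hlim ?_).congr' ?_
  · filter_upwards [self_mem_nhdsWithin] with ε hε
    exact (setIntegral_smul_resolvent_of_unitary hU hφ.continuous hc hε).1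
  · filter_upwards [self_mem_nhdsWithin] with ε hε
    exact (setIntegral_smul_resolvent_of_unitary hU hφ.continuous hc hε).2
end
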